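/- Let n be an odd integer with n ≥ 7 and let f : F → 𝔽₂ be defined by f(x) = tr(x^{15}). Then nl₃(f) ≥ 2^{n−1} − (1/2)·√((2^n − 1)·√((29/8)·2^{(3n+1)/2} + 2^{n+1} − 7·2^{(n+5)/2}) + 2^n). -/

import Mathlib

noncomputable section

/-- `Fq n` is the finite field with `2 ^ n` elements. -/
abbrev Fq (n : ℕ) : Type := GaloisField 2 n

/-- The absolute trace map `tr x = x + x^2 + x^4 + ⋯ + x^(2^(n-1))` from `Fq n` to `𝔽₂`. -/
def tr {n : ℕ} (x : Fq n) : ZMod 2 := Algebra.trace (ZMod 2) (Fq n) x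

/-- The derivative of `f` with respect to `a`. -/
def der {n : ℕ} (f : Fq n → ZMod 2) (a : Fq n) : Fq n → ZMod 2 :=
  fun x => f x + f (x + a)

/-- Iterated derivatives along a list of directions (head applied last/outermost). -/
def derIter {n : ℕ} (f : Fq n → ZMod 2) : List (Fq n) → (Fq n → ZMod 2)
  | [] => f
  | a :: as => der (derIter f as) a

/-- `g` has algebraic degree at most `r`: all `(r+1)`-th order derivatives vanish. -/
def degLE {n : ℕ} (g : Fq n → ZMod 2) (r : ℕ) : Prop :=
  ∀ l : List (Fq n), l.length = r + 1 → derIter g l = fun _ => 0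

/-- Hamming distance between two Boolean functions on `Fq n`. -/
def hdist {n : ℕ} (f g : Fq n → ZMod 2) : ℕ :=
  {x : Fq n | f x ≠ g x}.ncard

/-- The `r`-th order nonlinearity of `f`. -/
def nl {n : ℕ} (r : ℕ) (f : Fq n → ZMod 2) : ℕ :=
  sInf {d : ℕ | ∃ g : Fq n → ZMod 2, degLE g r ∧ d = hdist f g}

/-- The linear kernel of `f`: directions along which the derivative is constant. -/
def linKer {n : ℕ} (f : Fq n → ZMod 2) : Set (Fq n) :=
  {b | ∃ c : ZMod 2, ∀ x, der f b x = c}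

/-- The weight of a Boolean function on `Fq n`. -/
def wt {n : ℕ} (f : Fq n → ZMod 2) : ℕ := {x : Fq n | f x = 1}.ncard

/-!
Let `g` have degree at most three, `u = f + g` and `q = 2 ^ n`. The sum of the signs `(-1)^(u x)`
is `q - 2 d(f, g)`, and its square is the sum over `a` of the sign sums of the derivatives `D_a u`;
squaring once more leads to the sign sums of `D_b D_a u`. The fourth derivatives of `u` are those
of `f`, namely the traces of the Moore determinants `M(a, b, c, x)`, whatever `g` is. So `D_b D_a u`
is quadratic and its sign sum is at most the square root of `q` times the order of the radical of
the form `(c, x) ↦ Tr (M(a, b, c, x))`.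

With `℘ x = x² + x`, the identity `M(a, a b, a c, a x) = a¹⁵ M(℘ b, ℘ c, ℘ x)` relates this form to
`(c, x) ↦ Tr (a¹⁵ M(w, c, x))`, `w = ℘ (b / a)`, restricted to the hyperplane of trace zero. The
radical of the latter on the whole field has order 2 or 8. If `b ≠ 0, a`, the radical of the former
has order at most 32, and at most 8 unless `w` is exceptional: the radical of the latter has order 8
and lies in the hyperplane. Counting the pairs `(w, c)` with `c` in the radical at `w`, a symmetric
relation, in two ways expresses the number of exceptional `w` through the exponential sums
`T(A, B) = ∑ s, (-1)^Tr(A s⁷ + B s⁻³)`. Their second and third moments, combined with the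
nonnegativity of the number of exceptional elements, bound it by `(13 q - 192) / 32`.
-/

open Finset fwdDiff

section SignSum

/-- The nontrivial additive character `z ↦ (-1)^z` of `𝔽₂`, with integer values. -/
def signChar : AddChar (ZMod 2) ℤ :=
  AddChar.zmodChar 2 (ζ := -1) (by norm_num)

lemma signChar_eq_ite (z : ZMod 2) : signChar z = if z = 0 then 1 else -1 := by
  revert z; decide

lemma signChar_sub (z w : ZMod 2) : signChar (z - w) = signChar z * signChar w := by
  revert z w; decide

lemma signChar_le_one (z : ZMod 2) : signChar z ≤ 1 := by
  revert z; decide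

/-- The sum `∑ x, (-1)^(u x)` of the signs of an `𝔽₂`-valued function. -/
def signSum {G : Type*} [Fintype G] (u : G → ZMod 2) : ℤ :=
  ∑ x, signChar (u x)

lemma signSum_le_card {G : Type*} [Fintype G] (u : G → ZMod 2) : signSum u ≤ Fintype.card G := by
  simpa [signSum] using sum_le_sum fun x (_ : x ∈ univ) => signChar_le_one (u x)

variable {G : Type*} [AddCommGroup G]

lemma sum_mem_signChar [Fintype G] (K : AddSubgroup G) [DecidablePred (· ∈ K)]
    (φ : G →+ ZMod 2) [Decidable (K ≤ φ.ker)] :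
    ∑ x with x ∈ K, signChar (φ x) = if K ≤ φ.ker then (Nat.card K : ℤ) else 0 := by
  classical
  have hK : signChar.compAddMonoidHom (φ.comp K.subtype) = 0 ↔ K ≤ φ.ker := by
    simp [AddChar.ext_iff, SetLike.le_def, AddMonoidHom.mem_ker, signChar_eq_ite]
  rw [sum_subtype _ (p := (· ∈ K)) (by simp) (fun x => signChar (φ x)),
    Nat.card_eq_fintype_card]
  simpa [hK] using AddChar.sum_eq_ite (signChar.compAddMonoidHom (φ.comp K.subtype))

lemma signSum_addMonoidHom [Fintype G] (φ : G →+ ZMod 2) [Decidable (φ = 0)] :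
    signSum φ = if φ = 0 then (Fintype.card G : ℤ) else 0 := by
  classical
  simpa [signSum, top_le_iff, AddMonoidHom.ker_eq_top_iff] using sum_mem_signChar ⊤ φ

lemma signSum_sq [Fintype G] (u : G → ZMod 2) :
    signSum u ^ 2 = ∑ a, signSum (Δ_[a] u) := by
  simp only [signSum, fwdDiff, signChar_sub, sq, sum_mul_sum]
  rw [sum_comm (f := fun a x => signChar (u (x + a)) * signChar (u x))]
  refine sum_congr rfl fun x _ => ?_
  simp only [mul_comm (signChar (u x))]
  exact (Equiv.sum_comp (Equiv.addLeft x) fun y => signChar (u y) * signChar (u x)).symm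

lemma signSum_eq_of_fwdDiff_eq [Fintype G] {u : G → ZMod 2} {φ : G →+ ZMod 2}
    (hu : ∀ x y, Δ_[x] u y = φ x) : signSum u = signChar (u 0) * signSum φ := by
  simp only [signSum, mul_sum, ← AddChar.map_add_eq_mul]
  refine sum_congr rfl fun x _ => ?_
  rw [← hu x 0, fwdDiff, zero_add, add_sub_cancel]

lemma signSum_sq_le_card_mul_card_ker [Fintype G] {u : G → ZMod 2} (B : G →+ G →+ ZMod 2)
    (hB : ∀ c x y, Δ_[x] (Δ_[c] u) y = B c x) :
    signSum u ^ 2 ≤ Fintype.card G * Nat.card B.ker := by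
  classical
  have hterm : ∀ c, signSum (Δ_[c] u) ≤ if c ∈ B.ker then (Fintype.card G : ℤ) else 0 := by
    intro c
    rw [signSum_eq_of_fwdDiff_eq (hB c), signSum_addMonoidHom]
    simp only [AddMonoidHom.mem_ker]
    split_ifs
    · exact mul_le_of_le_one_left (by positivity) (signChar_le_one _)
    · simp
  calc signSum u ^ 2 = ∑ c, signSum (Δ_[c] u) := signSum_sq u
    _ ≤ ∑ c, if c ∈ B.ker then (Fintype.card G : ℤ) else 0 := sum_le_sum fun c _ => hterm c
    _ = Fintype.card G * Nat.card B.ker := by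
      rw [← sum_filter, sum_const, nsmul_eq_mul, mul_comm, Nat.card_eq_fintype_card,
        Fintype.card_subtype]

lemma signSum_sq_le_of_forall_fwdDiff [Fintype G] {u : G → ZMod 2} {M : ℝ}
    (hM : ∀ a ≠ 0, (signSum (Δ_[a] u) : ℝ) ^ 2 ≤ M) :
    (signSum u : ℝ) ^ 2 ≤ (Fintype.card G - 1) * √M + Fintype.card G := by
  classical
  have h0 : (signSum (Δ_[(0 : G)] u) : ℝ) ≤ Fintype.card G := mod_cast signSum_le_card _
  have hsq : (signSum u : ℝ) ^ 2 = ∑ a, (signSum (Δ_[a] u) : ℝ) := mod_cast signSum_sq u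
  have hne : ∑ a ∈ univ.erase 0, (signSum (Δ_[a] u) : ℝ) ≤ (Fintype.card G - 1) * √M := by
    refine (sum_le_card_nsmul _ _ _ fun a ha =>
      Real.le_sqrt_of_sq_le (hM a (ne_of_mem_erase ha))).trans_eq ?_
    rw [card_erase_of_mem (mem_univ _), nsmul_eq_mul, card_univ,
      Nat.cast_sub Fintype.card_pos, Nat.cast_one]
  rw [hsq, ← sum_erase_add _ _ (mem_univ (0 : G))]
  exact add_le_add hne h0

end SignSum

section Radical

variable {A : Type*} [AddCommGroup A]

lemma card_map_mul_card_inf_ker {B : Type*} [AddCommGroup B] (W : AddSubgroup A) (φ : A →+ B) :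
    Nat.card (W.map φ) * Nat.card ↥(W ⊓ φ.ker) = Nat.card W := by
  rw [← AddSubgroup.relIndex_ker, mul_comm, ← AddSubgroup.inf_relIndex_left,
    ← AddSubgroup.relIndex_bot_left, AddSubgroup.relIndex_mul_relIndex _ _ _ bot_le inf_le_left,
    AddSubgroup.relIndex_bot_left]

lemma card_le_two_mul_card_inf_ker [Finite A] (W : AddSubgroup A) (φ : A →+ ZMod 2) :
    Nat.card W ≤ 2 * Nat.card ↥(W ⊓ φ.ker) := by
  rw [← card_map_mul_card_inf_ker W φ]
  gcongr
  simpa using Nat.card_le_card_of_injective _ (W.map φ).subtype_injective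

lemma card_eq_two_mul_card_inf_ker {W : AddSubgroup A} {φ : A →+ ZMod 2} (hW : ¬W ≤ φ.ker) :
    Nat.card W = 2 * Nat.card ↥(W ⊓ φ.ker) := by
  have hmap : W.map φ = ⊤ :=
    (eq_bot_or_eq_top _).resolve_left fun h => hW ((AddSubgroup.map_eq_bot_iff W).mp h)
  rw [← card_map_mul_card_inf_ker W φ, hmap, AddSubgroup.card_top, Nat.card_zmod]

lemma card_preimage_eq_card_ker_mul {B : Type*} [AddCommGroup B] (φ : A →+ B) {S : Set B}
    (hS : S ⊆ Set.range φ) : Nat.card (φ ⁻¹' S) = Nat.card φ.ker * Nat.card S := by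
  choose σ hσ using hS
  rw [← Nat.card_prod]
  exact Nat.card_congr
    { toFun := fun x => (⟨x - σ x.2, by simp [AddMonoidHom.mem_ker, hσ]⟩, ⟨φ x, x.2⟩)
      invFun := fun p => ⟨p.1 + σ p.2.2, by simp [AddMonoidHom.mem_ker.mp p.1.2, hσ]⟩
      left_inv := fun x => by simp
      right_inv := fun p => by
        have hp : φ (p.1 + σ p.2.2) = p.2 := by simp [AddMonoidHom.mem_ker.mp p.1.2, hσ]
        ext <;> simp [hp] }

/-- The radical of the restriction to the subgroup `H` of a biadditive map `B`. -/
def restrictedRadical (B : A →+ A →+ ZMod 2) (H : AddSubgroup A) : AddSubgroup A where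
  carrier := {c | c ∈ H ∧ ∀ x ∈ H, B c x = 0}
  zero_mem' := ⟨zero_mem H, by simp⟩
  add_mem' hc hd := ⟨add_mem hc.1 hd.1, fun x hx => by simp [hc.2 x hx, hd.2 x hx]⟩
  neg_mem' hc := ⟨neg_mem hc.1, fun x hx => by simp [hc.2 x hx]⟩

variable {B : A →+ A →+ ZMod 2} {t : A →+ ZMod 2}

lemma mem_ker_of_mem_restrictedRadical_ker {c k : A} (hc : c ∈ restrictedRadical B t.ker)
    (hk : t k ≠ 0) (hBk : B c k = 0) : c ∈ B.ker := by
  ext x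
  by_cases hx : t x = 0
  · exact hc.2 x hx
  · have hxk : t (x - k) = 0 := by
      rw [map_sub]; revert hx hk; generalize t x = u; generalize t k = v; revert u v; decide
    simpa [hBk] using hc.2 (x - k) hxk

lemma card_restrictedRadical_ker_le [Finite A] :
    Nat.card (restrictedRadical B t.ker) ≤ 2 * Nat.card B.ker := by
  by_cases ht : ∃ k, t k ≠ 0
  · obtain ⟨k, hk⟩ := ht
    refine (card_le_two_mul_card_inf_ker _ (B.flip k)).trans ?_
    gcongr
    exact AddSubgroup.card_le_of_le fun c hc =>
      mem_ker_of_mem_restrictedRadical_ker hc.1 hk hc.2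
  · push Not at ht
    have hle : restrictedRadical B t.ker ≤ B.ker := fun c hc =>
      AddMonoidHom.ext fun x => hc.2 x (ht x)
    exact (AddSubgroup.card_le_of_le hle).trans (by lia)

lemma two_mul_card_restrictedRadical_ker_le [Finite A] (hB : ∀ x y, B x y = B y x)
    (ht : ¬B.ker ≤ t.ker) : 2 * Nat.card (restrictedRadical B t.ker) ≤ Nat.card B.ker := by
  obtain ⟨k, hk, hkt⟩ := SetLike.not_le_iff_exists.mp ht
  rw [card_eq_two_mul_card_inf_ker ht]
  gcongr
  refine AddSubgroup.card_le_of_le fun c hc => ⟨?_, hc.1⟩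
  exact mem_ker_of_mem_restrictedRadical_ker hc hkt (by rw [hB, AddMonoidHom.mem_ker.mp hk]; rfl)

end Radical

section Trace

variable (F : Type*) [Field F] [Algebra (ZMod 2) F]

/-- The absolute trace of a finite field of characteristic two, as an additive homomorphism. -/
def absTrace : F →+ ZMod 2 := (Algebra.trace (ZMod 2) F).toAddMonoidHom

end Trace

local notation "Tr" => absTrace _

section ArtinSchreier

variable {F : Type*} [Field F] [CharP F 2]

variable (F) in
/-- The Artin–Schreier map `x ↦ x² + x`. -/
def artinSchreier : F →+ F := (frobenius F 2 : F →+ F) + AddMonoidHom.id F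

lemma artinSchreier_apply (x : F) : artinSchreier F x = x ^ 2 + x := rfl

lemma artinSchreier_eq_zero_iff {x : F} : artinSchreier F x = 0 ↔ x = 0 ∨ x = 1 := by
  rw [artinSchreier_apply, sq, ← mul_add_one, mul_eq_zero, CharTwo.add_eq_zero]

lemma card_ker_artinSchreier : Nat.card (artinSchreier F).ker = 2 := by
  have hker : ((artinSchreier F).ker : Set F) = {0, 1} := by
    ext x
    exact artinSchreier_eq_zero_iff
  rw [← SetLike.coe_sort_coe, hker, Nat.card_coe_set_eq, Set.ncard_pair zero_ne_one]

lemma artinSchreier_inv_mul_ne_zero {a b : F} (ha : a ≠ 0) (hb : b ≠ 0) (hba : b ≠ a) :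
    artinSchreier F (a⁻¹ * b) ≠ 0 := by
  rw [Ne, artinSchreier_eq_zero_iff, not_or, inv_mul_eq_one₀ ha]
  exact ⟨mul_ne_zero (inv_ne_zero ha) hb, hba.symm⟩

end ArtinSchreier

section AbsTrace

variable {F : Type*} [Field F] [Algebra (ZMod 2) F]

lemma absTrace_one (hodd : Odd (Module.finrank (ZMod 2) F)) : Tr (1 : F) = 1 := by
  have h := Algebra.trace_algebraMap (S := F) (1 : ZMod 2)
  rw [map_one, nsmul_one] at h
  exact h.trans (ZMod.natCast_eq_one_iff_odd.mpr hodd)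

variable [Finite F]

lemma eq_zero_of_forall_absTrace_mul {y : F} (hy : ∀ x : F, Tr (y * x) = 0) : y = 0 :=
  (traceForm_nondegenerate (ZMod 2) F).1 y hy

lemma absTrace_sq (x : F) : Tr (x ^ 2) = Tr x := by
  have h := Algebra.trace_eq_of_algEquiv (FiniteField.frobeniusAlgEquivOfAlgebraic (ZMod 2) F) x
  rw [FiniteField.coe_frobeniusAlgEquivOfAlgebraic, ZMod.card] at h
  exact h

variable [CharP F 2]

lemma range_artinSchreier : (artinSchreier F).range = (absTrace F).ker := by
  have hle : (artinSchreier F).range ≤ (absTrace F).ker := by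
    rintro _ ⟨x, rfl⟩
    rw [AddMonoidHom.mem_ker, artinSchreier_apply, map_add, absTrace_sq, CharTwo.add_self_eq_zero]
  have htop : ¬(⊤ : AddSubgroup F) ≤ (absTrace F).ker := fun h =>
    one_ne_zero (eq_zero_of_forall_absTrace_mul (y := (1 : F)) fun x => h (AddSubgroup.mem_top _))
  refine AddSubgroup.eq_of_le_of_card_ge hle (le_of_mul_le_mul_left ?_ (two_pos (α := ℕ)))
  have hcard := card_map_mul_card_inf_ker ⊤ (artinSchreier F)
  rw [← AddMonoidHom.range_eq_map, top_inf_eq, card_ker_artinSchreier,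
    card_eq_two_mul_card_inf_ker htop, top_inf_eq, mul_comm] at hcard
  exact hcard.ge

lemma exists_sq_add_self_eq_iff {w : F} : (∃ x, x ^ 2 + x = w) ↔ Tr w = 0 :=
  SetLike.ext_iff.mp range_artinSchreier w

lemma artinSchreier_artinSchreier_eq_zero_iff (h1 : Tr (1 : F) = 1) {z : F} :
    artinSchreier F (artinSchreier F z) = 0 ↔ z = 0 ∨ z = 1 := by
  rw [← artinSchreier_eq_zero_iff, artinSchreier_eq_zero_iff (x := artinSchreier F z),
    or_iff_left_iff_imp]
  intro hz
  have h10 : Tr (1 : F) = 0 := exists_sq_add_self_eq_iff.mp ⟨z, hz⟩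
  simp [h1] at h10

lemma card_preimage_artinSchreier {S : Set F} (hS : ∀ w ∈ S, Tr w = 0) :
    Nat.card (artinSchreier F ⁻¹' S) = 2 * Nat.card S := by
  have hrange : S ⊆ Set.range (artinSchreier F) := fun w hw =>
    exists_sq_add_self_eq_iff.mpr (hS w hw)
  rw [card_preimage_eq_card_ker_mul _ hrange, card_ker_artinSchreier]

lemma eq_zero_or_eq_one_of_absTrace_mul {y : F} (hy : ∀ x : F, Tr x = 0 → Tr (y * x) = 0) :
    y = 0 ∨ y = 1 := by
  refine artinSchreier_eq_zero_iff.mp (eq_zero_of_forall_absTrace_mul fun z => ?_)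
  obtain ⟨w, rfl⟩ := surjective_frobenius F 2 z
  have hw : Tr (w ^ 2 + w) = 0 := exists_sq_add_self_eq_iff.mp ⟨w, rfl⟩
  calc Tr (artinSchreier F y * w ^ 2)
      = Tr ((y * w) ^ 2) + Tr (y * w ^ 2) := by
        rw [artinSchreier_apply, add_mul, map_add, mul_pow]
    _ = Tr (y * (w ^ 2 + w)) := by rw [absTrace_sq, mul_add, map_add, add_comm]
    _ = 0 := hy _ hw

end AbsTrace

section Moore

variable {R : Type*} [CommRing R]

/-- The Moore determinant `det (v i ^ 2 ^ j)`; over a ring of characteristic two it is the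
alternating multilinear form obtained by polarizing `x ^ (2 ^ k - 1)`. -/
def mooreDet {k : ℕ} (v : Fin k → R) : R :=
  (Matrix.of fun i j : Fin k => v i ^ 2 ^ (j : ℕ)).det

lemma mooreDet_mul {k : ℕ} (a : R) (v : Fin k → R) :
    mooreDet (fun i => a * v i) = a ^ (2 ^ k - 1) * mooreDet v := by
  have hprod : ∏ j : Fin k, a ^ 2 ^ (j : ℕ) = a ^ (2 ^ k - 1) := by
    rw [prod_pow_eq_pow_sum, Fin.sum_univ_eq_sum_range fun j => 2 ^ j,
      Nat.geomSum_eq le_rfl, Nat.div_one]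
  simp only [mooreDet, mul_pow, ← hprod]
  exact Matrix.det_mul_row (fun j : Fin k => a ^ 2 ^ (j : ℕ)) _

variable [CharP R 2]

lemma mooreDet_cons_one {k : ℕ} (v : Fin k → R) :
    mooreDet (Fin.cons 1 v : Fin (k + 1) → R) = mooreDet fun i => v i ^ 2 + v i := by
  let w : Fin (k + 1) → R := Fin.cons 1 v
  let D : Matrix (Fin (k + 1)) (Fin (k + 1)) R :=
    Matrix.of fun i => Fin.cons (w i) fun j => w i ^ 2 ^ (j + 1 : ℕ) - w i ^ 2 ^ (j : ℕ)
  have hD : mooreDet w = D.det :=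
    Matrix.det_eq_of_forall_col_eq_smul_add_pred (fun _ => 1) (fun i => by simp [D])
      fun i j => by simp [D]
  have hminor : D.submatrix Fin.succ Fin.succ =
      Matrix.of fun i j : Fin k => (v i ^ 2 + v i) ^ 2 ^ (j : ℕ) := by
    ext i j
    simp [D, w, pow_succ', pow_mul, add_pow_char_pow, CharTwo.sub_eq_add]
  change mooreDet w = _
  rw [hD, Matrix.det_succ_row_zero, Fin.sum_univ_succ,
    sum_eq_zero fun j _ => by simp [D, w]]
  simp [hminor, mooreDet, D, w]

lemma mooreDet_cons_mul {k : ℕ} (a : R) (v : Fin k → R) :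
    mooreDet (Fin.cons a fun i => a * v i : Fin (k + 1) → R) =
      a ^ (2 ^ (k + 1) - 1) * mooreDet fun i => v i ^ 2 + v i := by
  have hcons : (Fin.cons a fun i => a * v i : Fin (k + 1) → R) =
      fun i => a * (Fin.cons 1 v : Fin (k + 1) → R) i := by
    ext i; cases i using Fin.cases <;> simp
  rw [hcons, mooreDet_mul, mooreDet_cons_one]

lemma mooreDet_three (b c x : R) : mooreDet ![b, c, x] =
    b * (c ^ 2 * x ^ 4 + c ^ 4 * x ^ 2) + b ^ 2 * (c * x ^ 4 + c ^ 4 * x)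
      + b ^ 4 * (c * x ^ 2 + c ^ 2 * x) := by
  simp [mooreDet, Matrix.det_fin_three, CharTwo.sub_eq_add]
  ring

lemma mooreDet_mul_three (b y x : R) : mooreDet ![b, b * y, b * x] =
    b ^ 7 * ((y ^ 2 + y) * (x ^ 2 + x) ^ 2 + (y ^ 2 + y) ^ 2 * (x ^ 2 + x)) := by
  have hcons : ![b, b * y, b * x] = Fin.cons b fun i => b * ![y, x] i := by
    ext i; fin_cases i <;> rfl
  rw [hcons, mooreDet_cons_mul]
  simp [mooreDet, Matrix.det_fin_two, CharTwo.sub_eq_add]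

lemma mooreDet_three_add (b c x y : R) :
    mooreDet ![b, c, x + y] = mooreDet ![b, c, x] + mooreDet ![b, c, y] := by
  have hfour : (x + y) ^ 4 = x ^ 4 + y ^ 4 := add_pow_char_pow x y (p := 2) (n := 2)
  simp only [mooreDet_three, CharTwo.add_sq, hfour]
  ring

lemma mooreDet_three_swap_right (b c x : R) : mooreDet ![b, x, c] = mooreDet ![b, c, x] := by
  simp only [mooreDet_three]
  ring

lemma mooreDet_three_swap_left (b c x : R) : mooreDet ![c, b, x] = mooreDet ![b, c, x] := by
  simp only [mooreDet_three]
  ring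

lemma mooreDet_four (a b c x : R) : mooreDet ![a, b, c, x] =
    a * (b ^ 2 * (c ^ 4 * x ^ 8 + c ^ 8 * x ^ 4) + b ^ 4 * (c ^ 2 * x ^ 8 + c ^ 8 * x ^ 2)
        + b ^ 8 * (c ^ 2 * x ^ 4 + c ^ 4 * x ^ 2))
      + a ^ 2 * (b * (c ^ 4 * x ^ 8 + c ^ 8 * x ^ 4) + b ^ 4 * (c * x ^ 8 + c ^ 8 * x)
        + b ^ 8 * (c * x ^ 4 + c ^ 4 * x))
      + a ^ 4 * (b * (c ^ 2 * x ^ 8 + c ^ 8 * x ^ 2) + b ^ 2 * (c * x ^ 8 + c ^ 8 * x)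
        + b ^ 8 * (c * x ^ 2 + c ^ 2 * x))
      + a ^ 8 * mooreDet ![b, c, x] := by
  rw [mooreDet_three]
  simp [mooreDet, Matrix.det_succ_row_zero, Fin.sum_univ_succ, Fin.succAbove, CharTwo.neg_eq]
  ring

lemma fwdDiff_four_pow_fifteen (a b c x y : R) :
    Δ_[x] (Δ_[c] (Δ_[b] (Δ_[a] fun z => z ^ 15))) y = mooreDet ![a, b, c, x] := by
  have hpow : (fun z : R => z ^ 15) = fun z => z * frobenius R 2 z
      * iterateFrobenius R 2 2 z * iterateFrobenius R 2 3 z := by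
    funext z
    simp only [frobenius_def, iterateFrobenius_def]
    ring
  rw [hpow, mooreDet_four, mooreDet_three]
  simp only [fwdDiff, map_add]
  simp only [frobenius_def, iterateFrobenius_def]
  ring

end Moore

section CubicForm

variable {F : Type*} [Field F] [Algebra (ZMod 2) F] [CharP F 2]

/-- The form `(c, x) ↦ Tr (μ · mooreDet ![b, c, x])`, the slice at `b` of the trilinear form
obtained by polarizing the cubic function `x ↦ Tr (μ x⁷)`. -/
def cubicForm (μ b : F) : F →+ F →+ ZMod 2 :=
  AddMonoidHom.mk'
    (fun c => AddMonoidHom.mk' (fun x => Tr (μ * mooreDet ![b, c, x])) fun x y => by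
      rw [mooreDet_three_add, mul_add, map_add])
    fun c d => AddMonoidHom.ext fun x => by
      simp [mooreDet_three_swap_right b x, mooreDet_three_add, mul_add]

lemma cubicForm_apply (μ b c x : F) : cubicForm μ b c x = Tr (μ * mooreDet ![b, c, x]) := rfl

lemma cubicForm_comm (μ b c x : F) : cubicForm μ b c x = cubicForm μ b x c := by
  rw [cubicForm_apply, cubicForm_apply, mooreDet_three_swap_right]

lemma mem_ker_cubicForm_comm {μ b c : F} : c ∈ (cubicForm μ b).ker ↔ b ∈ (cubicForm μ c).ker := by
  simp only [AddMonoidHom.mem_ker, AddMonoidHom.ext_iff, cubicForm_apply,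
    mooreDet_three_swap_left b c]

lemma self_mem_ker_cubicForm (μ b : F) : b ∈ (cubicForm μ b).ker := by
  ext x
  have hbb : mooreDet ![b, b, x] = 0 := by
    rw [mooreDet_three]
    linear_combination (b ^ 3 * x ^ 4 + b ^ 5 * x ^ 2 + b ^ 6 * x) *
      (CharTwo.two_eq_zero : (2 : F) = 0)
  simp [cubicForm_apply, hbb]

lemma cubicForm_zero (μ : F) : cubicForm μ 0 = 0 := by
  ext c x
  simp [cubicForm_apply, mooreDet_three]

variable [Finite F]

/- With `℘ = artinSchreier F`, the terms `℘ y * ℘ x ^ 2` and `℘ y ^ 2 * ℘ x` are merged by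
`Tr w = Tr (w ^ 2)`; this uses `μ b⁷ = δ⁻³`. -/
lemma cubicForm_mul_mul {μ b δ y z : F} (hδ : μ * b ^ 7 * δ ^ 3 = 1)
    (hyz : artinSchreier F y = δ * z) (x : F) : cubicForm μ b (b * y) (b * x) =
      Tr ((δ ^ 2)⁻¹ * artinSchreier F (artinSchreier F z) * artinSchreier F x ^ 2) := by
  have hδ0 : δ ≠ 0 := by rintro rfl; simp at hδ
  have hμ : μ * b ^ 7 = (δ ^ 3)⁻¹ := eq_inv_of_mul_eq_one_left hδ
  have hz : artinSchreier F (artinSchreier F z) = z ^ 4 + z := by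
    simp only [artinSchreier_apply, CharTwo.add_sq]
    linear_combination z ^ 2 * (CharTwo.two_eq_zero : (2 : F) = 0)
  set w := artinSchreier F x
  calc cubicForm μ b (b * y) (b * x)
      = Tr ((δ ^ 2)⁻¹ * z * w ^ 2) + Tr (δ⁻¹ * z ^ 2 * w) := by
        rw [cubicForm_apply, mooreDet_mul_three, ← mul_assoc, hμ, ← artinSchreier_apply,
          ← artinSchreier_apply, hyz, ← map_add]
        congr 1
        change _ * (_ * w ^ 2 + _ * w) = _
        field_simp
    _ = Tr ((δ ^ 2)⁻¹ * z * w ^ 2) + Tr ((δ⁻¹ * z ^ 2 * w) ^ 2) := by rw [absTrace_sq]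
    _ = Tr ((δ ^ 2)⁻¹ * artinSchreier F (artinSchreier F z) * w ^ 2) := by
        rw [← map_add, hz]
        congr 1
        field_simp
        ring

lemma mul_mem_ker_cubicForm_iff {μ b δ y z : F} (hδ : μ * b ^ 7 * δ ^ 3 = 1)
    (hyz : artinSchreier F y = δ * z) : b * y ∈ (cubicForm μ b).ker ↔
      artinSchreier F (artinSchreier F z) = 0 ∨ artinSchreier F (artinSchreier F z) = δ ^ 2 := by
  have hδ0 : δ ≠ 0 := by rintro rfl; simp at hδ
  have hb0 : b ≠ 0 := by rintro rfl; simp at hδ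
  set v := artinSchreier F (artinSchreier F z)
  constructor
  · intro hy
    have hv : (δ ^ 2)⁻¹ * v = 0 ∨ (δ ^ 2)⁻¹ * v = 1 := by
      refine eq_zero_or_eq_one_of_absTrace_mul fun u hu => ?_
      obtain ⟨s, rfl⟩ := surjective_frobenius F 2 u
      rw [frobenius_def, absTrace_sq] at hu
      obtain ⟨x, rfl⟩ := exists_sq_add_self_eq_iff.mpr hu
      exact (cubicForm_mul_mul hδ hyz x).symm.trans (DFunLike.congr_fun hy (b * x))
    exact hv.imp (by simp [hδ0]) fun h => (inv_mul_eq_one₀ (pow_ne_zero 2 hδ0)).mp h |>.symm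
  · intro hv
    ext x
    obtain ⟨x, rfl⟩ : ∃ x', x = b * x' := ⟨b⁻¹ * x, (mul_inv_cancel_left₀ hb0 x).symm⟩
    rw [cubicForm_mul_mul hδ hyz]
    rcases hv with hv | hv <;> simp only [v] at hv
    · simp [hv]
    · rw [hv, inv_mul_cancel₀ (pow_ne_zero 2 hδ0), one_mul, absTrace_sq]
      exact exists_sq_add_self_eq_iff.mp ⟨x, rfl⟩

lemma card_ker_cubicForm {μ b δ : F} (hδ : μ * b ^ 7 * δ ^ 3 = 1) :
    Nat.card (cubicForm μ b).ker = 2 * Nat.card {z : F | Tr (δ * z) = 0 ∧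
      (artinSchreier F (artinSchreier F z) = 0 ∨
        artinSchreier F (artinSchreier F z) = δ ^ 2)} := by
  have hδ0 : δ ≠ 0 := by rintro rfl; simp at hδ
  have hb0 : b ≠ 0 := by rintro rfl; simp at hδ
  set Z := {z : F | Tr (δ * z) = 0 ∧ (artinSchreier F (artinSchreier F z) = 0 ∨
        artinSchreier F (artinSchreier F z) = δ ^ 2)}
  have hZcard : Nat.card ((δ * ·) '' Z) = Nat.card Z :=
    Nat.card_image_of_injective (mul_right_injective₀ hδ0) Z
  have hpre : (b * ·) ⁻¹' ((cubicForm μ b).ker : Set F) = artinSchreier F ⁻¹' ((δ * ·) '' Z) := by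
    ext y
    obtain ⟨z, hyz⟩ : ∃ z, artinSchreier F y = δ * z := ⟨_, (mul_inv_cancel_left₀ hδ0 _).symm⟩
    have htr : Tr (δ * z) = 0 := hyz ▸ exists_sq_add_self_eq_iff.mp ⟨y, rfl⟩
    simp [hyz, hδ0, Z, htr, mul_mem_ker_cubicForm_iff hδ hyz]
  rw [← hZcard, ← card_preimage_artinSchreier, ← hpre]
  · exact (Nat.card_preimage_of_injective (mul_right_injective₀ hb0) (by
      rw [(mul_left_surjective₀ hb0).range_eq]; exact Set.subset_univ _)).symm
  · rintro _ ⟨z, hz, rfl⟩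
    exact hz.1

lemma card_ker_cubicForm_of_absTrace_eq_one (h1 : Tr (1 : F) = 1) {μ b δ : F}
    (hδ : μ * b ^ 7 * δ ^ 3 = 1) (htr : Tr δ = 1) : Nat.card (cubicForm μ b).ker = 2 := by
  have hZ : {z : F | Tr (δ * z) = 0 ∧ (artinSchreier F (artinSchreier F z) = 0 ∨
      artinSchreier F (artinSchreier F z) = δ ^ 2)} = {0} := by
    refine Set.Subset.antisymm ?_ (by simp)
    rintro z ⟨hz, h | h⟩
    · refine ((artinSchreier_artinSchreier_eq_zero_iff h1).mp h).resolve_right ?_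
      rintro rfl
      simp [htr] at hz
    · have hδtr := exists_sq_add_self_eq_iff.mp ⟨_, h⟩
      simp [absTrace_sq, htr] at hδtr
  rw [card_ker_cubicForm hδ, hZ]
  simp

lemma exists_artinSchreier_artinSchreier_eq (h1 : Tr (1 : F) = 1) {w : F} (hw : Tr w = 0) :
    ∃ z, artinSchreier F (artinSchreier F z) = w := by
  obtain ⟨u, hu⟩ := exists_sq_add_self_eq_iff.mpr hw
  obtain ⟨v, hv, hvtr⟩ : ∃ v, artinSchreier F v = w ∧ Tr v = 0 := by
    by_cases hutr : Tr u = 0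
    · exact ⟨u, hu, hutr⟩
    · refine ⟨u + 1, ?_, ?_⟩
      · rw [map_add, artinSchreier_eq_zero_iff.mpr (Or.inr rfl), add_zero]
        exact hu
      · have hu1 : Tr u = 1 := Fin.eq_one_of_ne_zero _ hutr
        rw [map_add, h1, hu1, CharTwo.add_self_eq_zero]
  obtain ⟨z, rfl⟩ := exists_sq_add_self_eq_iff.mpr hvtr
  exact ⟨z, hv⟩

lemma absTrace_mul_eq_zero_of_artinSchreier {δ z : F}
    (hz : artinSchreier F (artinSchreier F z) = δ ^ 2) : Tr (δ * z) = 0 := by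
  rw [← absTrace_sq, mul_pow, ← hz]
  refine exists_sq_add_self_eq_iff.mp ⟨z ^ 3, ?_⟩
  simp only [artinSchreier_apply, CharTwo.add_sq]
  linear_combination -z ^ 4 * (CharTwo.two_eq_zero : (2 : F) = 0)

lemma card_ker_cubicForm_of_absTrace_eq_zero (h1 : Tr (1 : F) = 1) {μ b δ : F}
    (hδ : μ * b ^ 7 * δ ^ 3 = 1) (htr : Tr δ = 0) : Nat.card (cubicForm μ b).ker = 8 := by
  have hδ0 : δ ≠ 0 := by rintro rfl; simp at hδ
  obtain ⟨z₀, hz₀⟩ := exists_artinSchreier_artinSchreier_eq h1 ((absTrace_sq δ).trans htr)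
  have hker := @artinSchreier_artinSchreier_eq_zero_iff F _ _ _ _ h1
  have hz₀01 : z₀ ≠ 0 ∧ z₀ ≠ 1 := by
    rw [← not_or, ← hker, hz₀]
    exact pow_ne_zero 2 hδ0
  have hZ : {z : F | Tr (δ * z) = 0 ∧ (artinSchreier F (artinSchreier F z) = 0 ∨
      artinSchreier F (artinSchreier F z) = δ ^ 2)} = {0, 1, z₀, z₀ + 1} := by
    ext z
    have hcoset : artinSchreier F (artinSchreier F z) = δ ^ 2 ↔ z = z₀ ∨ z = z₀ + 1 := by
      rw [← hz₀, ← sub_eq_zero, ← map_sub, ← map_sub, hker, sub_eq_zero, sub_eq_iff_eq_add']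
    have hZtr (h : artinSchreier F (artinSchreier F z) = 0 ∨
        artinSchreier F (artinSchreier F z) = δ ^ 2) : Tr (δ * z) = 0 := by
      rcases h with h | h
      · rcases hker.mp h with rfl | rfl <;> simp [htr]
      · exact absTrace_mul_eq_zero_of_artinSchreier h
    rw [Set.mem_ofPred_eq, and_iff_right_of_imp hZtr, hker, hcoset, or_assoc]
    rfl
  have hcard : Set.ncard {0, 1, z₀, z₀ + 1} = 4 := by
    classical
    rw [show ({0, 1, z₀, z₀ + 1} : Set F) = ({0, 1, z₀, z₀ + 1} : Finset F) by simp,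
      Set.ncard_coe_finset]
    have h01 : z₀ + 1 ≠ 0 ∧ z₀ + 1 ≠ 1 := by simpa [CharTwo.add_eq_zero] using hz₀01.symm
    rw [card_insert_of_notMem, card_insert_of_notMem, card_pair] <;>
      simp [hz₀01.1.symm, hz₀01.2.symm, h01.1.symm, h01.2.symm]
  rw [card_ker_cubicForm hδ, hZ, Nat.card_coe_set_eq, hcard]

lemma card_ker_cubicForm_eq (h1 : Tr (1 : F) = 1) {μ b δ : F} (hδ : μ * b ^ 7 * δ ^ 3 = 1) :
    (Nat.card (cubicForm μ b).ker : ℤ) = 5 + 3 * signChar (Tr δ) := by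
  by_cases htr : Tr δ = 0
  · rw [card_ker_cubicForm_of_absTrace_eq_zero h1 hδ htr, htr, AddChar.map_zero_eq_one]
    rfl
  · have htr1 : Tr δ = 1 := Fin.eq_one_of_ne_zero _ htr
    rw [card_ker_cubicForm_of_absTrace_eq_one h1 hδ htr1, htr1, signChar_eq_ite]
    rfl

lemma ker_cubicForm_eq_pair (h1 : Tr (1 : F) = 1) {μ b δ : F} (hδ : μ * b ^ 7 * δ ^ 3 = 1)
    (htr : Tr δ = 1) : ((cubicForm μ b).ker : Set F) = {0, b} := by
  have hb : b ≠ 0 := by rintro rfl; simp at hδ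
  refine (Set.eq_of_subset_of_ncard_le ?_ ?_).symm
  · rintro x (rfl | rfl)
    exacts [zero_mem _, self_mem_ker_cubicForm _ _]
  · rw [Set.ncard_pair hb.symm]
    exact (card_ker_cubicForm_of_absTrace_eq_one h1 hδ htr).le

end CubicForm

section Exceptional

lemma sum_signChar_absTrace {F : Type*} [Field F] [Fintype F] [Algebra (ZMod 2) F] :
    ∑ b : F, signChar (Tr b) = 0 := by
  classical
  have hne : absTrace F ≠ 0 := fun h => one_ne_zero
    (eq_zero_of_forall_absTrace_mul (y := (1 : F)) fun x => by simp [h])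
  simpa [signSum, hne] using signSum_addMonoidHom (absTrace F)

variable {F : Type*} [Field F] [Fintype F] [Algebra (ZMod 2) F] [CharP F 2]

open Classical in
/-- The nonzero `b` for which the radical of `cubicForm μ b` is as large as possible and contained
in the trace-zero hyperplane; only for these does restricting `cubicForm μ b` to that hyperplane
fail to shrink a radical of order 8. -/
def exceptionalSet (μ : F) : Finset F :=
  {b | b ≠ 0 ∧ Nat.card (cubicForm μ b).ker = 8 ∧ (cubicForm μ b).ker ≤ (absTrace F).ker}

lemma mem_exceptionalSet {μ b : F} : b ∈ exceptionalSet μ ↔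
    b ≠ 0 ∧ Nat.card (cubicForm μ b).ker = 8 ∧ (cubicForm μ b).ker ≤ (absTrace F).ker := by
  simp only [exceptionalSet, mem_filter_univ]

open Classical in
lemma two_mul_sum_ker_cubicForm (h1 : Tr (1 : F) = 1) {μ b δ : F} (hδ : μ * b ^ 7 * δ ^ 3 = 1) :
    2 * ∑ c with c ∈ (cubicForm μ b).ker, signChar (Tr c) =
      16 * (if b ∈ exceptionalSet μ then 1 else 0)
        + (1 - signChar (Tr δ)) * (1 + signChar (Tr b)) := by
  have hb : b ≠ 0 := by rintro rfl; simp at hδ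
  rw [sum_mem_signChar]
  by_cases htr : Tr δ = 0
  · have hcard := card_ker_cubicForm_of_absTrace_eq_zero h1 hδ htr
    have hmem : b ∈ exceptionalSet μ ↔ (cubicForm μ b).ker ≤ (absTrace F).ker := by
      simp only [mem_exceptionalSet, hb, hcard, ne_eq, not_false_eq_true, true_and]
    rw [hcard, htr, AddChar.map_zero_eq_one]
    split_ifs <;> simp_all
  · have htr1 : Tr δ = 1 := Fin.eq_one_of_ne_zero _ htr
    have hcard := card_ker_cubicForm_of_absTrace_eq_one h1 hδ htr1
    have hker : (cubicForm μ b).ker ≤ (absTrace F).ker ↔ Tr b = 0 := by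
      rw [← SetLike.coe_subset_coe, ker_cubicForm_eq_pair h1 hδ htr1]
      simp [Set.insert_subset_iff]
    have hmem : b ∉ exceptionalSet μ := fun h => by
      have h8 := (mem_exceptionalSet.mp h).2.1
      omega
    simp only [hcard, hker, hmem, htr1, signChar_eq_ite]
    split_ifs <;> simp_all

lemma sum_sum_ker_cubicForm (μ : F) [∀ b, DecidablePred (· ∈ (cubicForm μ b).ker)] :
    ∑ b, ∑ c with c ∈ (cubicForm μ b).ker, signChar (Tr c) =
      ∑ b, signChar (Tr b) * Nat.card (cubicForm μ b).ker := by
  have hswap : ∑ b, ∑ c with c ∈ (cubicForm μ b).ker, signChar (Tr c) =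
      ∑ c, ∑ b with b ∈ (cubicForm μ c).ker, signChar (Tr c) :=
    sum_comm' fun b c => by simp [mem_ker_cubicForm_comm (b := b)]
  rw [hswap]
  refine sum_congr rfl fun c _ => ?_
  rw [sum_const, nsmul_eq_mul, mul_comm, Nat.card_eq_fintype_card, Fintype.card_subtype]

/- Double counting of the pairs `c ∈ ker (cubicForm μ b)`, a symmetric relation, weighted by the
sign of `Tr c`. -/
lemma sixteen_mul_card_exceptionalSet (h1 : Tr (1 : F) = 1) {μ : F} {δ : F → F} (hδ0 : δ 0 = 0)
    (hδ : ∀ b ≠ 0, μ * b ^ 7 * δ b ^ 3 = 1) :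
    16 * (#(exceptionalSet μ) : ℤ) = Fintype.card F - 16 + ∑ b, signChar (Tr (δ b))
      + 7 * ∑ b, signChar (Tr (δ b + b)) := by
  classical
  have hS : ∀ b, 2 * ∑ c with c ∈ (cubicForm μ b).ker, signChar (Tr c) =
      16 * (if b ∈ exceptionalSet μ then 1 else 0)
        + (1 - signChar (Tr (δ b))) * (1 + signChar (Tr b)) := by
    intro b
    by_cases hb : b = 0
    · subst hb
      simp [cubicForm_zero, hδ0, mem_exceptionalSet, sum_signChar_absTrace]
    · exact two_mul_sum_ker_cubicForm h1 (hδ b hb)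
  have hK : ∀ b, signChar (Tr b) * Nat.card (cubicForm μ b).ker =
      signChar (Tr b) * (5 + 3 * signChar (Tr (δ b))) +
        if b = 0 then (Fintype.card F : ℤ) - 8 else 0 := by
    intro b
    split_ifs with hb
    · subst hb
      simp [cubicForm_zero, hδ0]
    · rw [card_ker_cubicForm_eq h1 (hδ b hb), add_zero]
  have hsum : ∑ b, (16 * (if b ∈ exceptionalSet μ then 1 else 0) + 1 - 9 * signChar (Tr b)
      - signChar (Tr (δ b)) - 7 * signChar (Tr (δ b + b))
      - 2 * if b = 0 then (Fintype.card F : ℤ) - 8 else 0) = 0 := by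
    refine Eq.trans ?_ (sub_eq_zero.mpr (congrArg (2 * ·) (sum_sum_ker_cubicForm μ)))
    simp only [mul_sum, hK, ← sum_sub_distrib]
    refine sum_congr rfl fun b _ => ?_
    rw [← mul_sum, hS, map_add, AddChar.map_add_eq_mul]
    ring
  simp only [sum_sub_distrib, sum_add_distrib, ← mul_sum, sum_signChar_absTrace] at hsum
  simp only [sum_ite_mem, univ_inter, sum_const, card_univ, sum_ite_eq', mem_univ, if_true,
    nsmul_eq_mul, mul_one, mul_zero] at hsum
  linear_combination hsum

end Exceptional

section PowerSum

lemma signSum_mul_signSum {ι κ : Type*} [Fintype ι] [Fintype κ] (u : ι → ZMod 2)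
    (v : κ → ZMod 2) : signSum u * signSum v = signSum fun p : ι × κ => u p.1 + v p.2 := by
  simp only [signSum, AddChar.map_add_eq_mul, Fintype.sum_prod_type, sum_mul_sum]

variable {F : Type*} [Field F] [Fintype F]

lemma card_filter_pow_eq_le [DecidableEq F] {d : ℕ} (hd : 0 < d) (a : F) :
    #{s | s ^ d = a} ≤ d := by
  calc #{s | s ^ d = a} ≤ #(Polynomial.nthRoots d a).toFinset := by
        refine card_le_card fun s hs => ?_
        simpa [Polynomial.mem_nthRoots hd] using hs
    _ ≤ d := (Multiset.toFinset_card_le _).trans (Polynomial.card_nthRoots d a)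

variable (F) in
lemma card_pow_eq_pow_le [DecidableEq F] {d : ℕ} (hd : 0 < d) :
    #{p : F × F | p.1 ^ d = p.2 ^ d} ≤ d * (Fintype.card F - 1) + 1 := by
  have hfib : ∀ r : F, #{s | s ^ d = r ^ d} ≤ if r = 0 then 1 else d := fun r => by
    split_ifs with hr
    · simp [hr, hd.ne', filter_eq']
    · exact card_filter_pow_eq_le hd _
  calc #{p : F × F | p.1 ^ d = p.2 ^ d}
      = ∑ r : F, #{s | s ^ d = r ^ d} := by
        simp only [card_filter, Fintype.sum_prod_type_right]
    _ ≤ ∑ r : F, if r = 0 then 1 else d := sum_le_sum fun r _ => hfib r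
    _ = d * (Fintype.card F - 1) + 1 := by
        rw [← sum_erase_add _ _ (mem_univ (0 : F)), if_pos rfl,
          sum_congr rfl fun r hr => if_neg (ne_of_mem_erase hr), sum_const,
          card_erase_of_mem (mem_univ _), card_univ, smul_eq_mul, mul_comm]

variable [Algebra (ZMod 2) F]

lemma sum_signChar_absTrace_mul [DecidableEq F] (y : F) :
    ∑ A, signChar (Tr (A * y)) = if y = 0 then (Fintype.card F : ℤ) else 0 := by
  split_ifs with hy
  · simp [hy]
  · exact (Equiv.sum_comp (Equiv.mulRight₀ y hy) fun b => signChar (Tr b)).trans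
      sum_signChar_absTrace

lemma sum_signSum_absTrace_mul [DecidableEq F] {ι : Type*} [Fintype ι] (α : ι → F) :
    ∑ A, signSum (fun i => Tr (A * α i)) = Fintype.card F * #{i | α i = 0} := by
  simp only [signSum]
  rw [sum_comm]
  simp only [sum_signChar_absTrace_mul]
  rw [← sum_filter, sum_const, nsmul_eq_mul, mul_comm]

lemma sum_sum_signSum_absTrace [DecidableEq F] {ι : Type*} [Fintype ι] (α β : ι → F) :
    ∑ A, ∑ B, signSum (fun i => Tr (A * α i + B * β i)) =
      (Fintype.card F : ℤ) ^ 2 * #{i | α i = 0 ∧ β i = 0} := by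
  have hi : ∀ i, ∑ A, ∑ B, signChar (Tr (A * α i + B * β i)) =
      if α i = 0 ∧ β i = 0 then (Fintype.card F : ℤ) ^ 2 else 0 := fun i => by
    simp only [map_add, AddChar.map_add_eq_mul, ← sum_mul_sum, sum_signChar_absTrace_mul]
    split_ifs <;> simp_all [sq]
  calc ∑ A, ∑ B, signSum (fun i => Tr (A * α i + B * β i))
      = ∑ i, ∑ A, ∑ B, signChar (Tr (A * α i + B * β i)) :=
        (sum_congr rfl fun A _ => sum_comm).trans sum_comm
    _ = (Fintype.card F : ℤ) ^ 2 * #{i | α i = 0 ∧ β i = 0} := by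
        simp only [hi]
        rw [← sum_filter, sum_const, nsmul_eq_mul, mul_comm]

lemma sum_erase_signSum_pow_sq_le [CharP F 2] [DecidableEq F] {d : ℕ} (hd : 0 < d) :
    ∑ A ∈ univ.erase (0 : F), signSum (fun s => Tr (A * s ^ d)) ^ 2 ≤
      (d - 1) * Fintype.card F * (Fintype.card F - 1) := by
  have hcard : (#{p : F × F | p.1 ^ d = p.2 ^ d} : ℤ) ≤ d * (Fintype.card F - 1) + 1 := by
    have h := card_pow_eq_pow_le F hd
    zify [Nat.one_le_iff_ne_zero.mpr (Fintype.card_ne_zero (α := F))] at h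
    exact h
  have hall : ∑ A, signSum (fun s : F => Tr (A * s ^ d)) ^ 2 =
      Fintype.card F * #{p : F × F | p.1 ^ d = p.2 ^ d} := by
    simp only [sq (signSum _), signSum_mul_signSum, ← map_add, ← mul_add, sum_signSum_absTrace_mul,
      CharTwo.add_eq_zero]
  have hzero : signSum (fun s : F => Tr ((0 : F) * s ^ d)) = Fintype.card F := by
    simp [signSum]
  have hsplit := sum_erase_add univ (fun A => signSum (fun s : F => Tr (A * s ^ d)) ^ 2)
    (mem_univ 0)
  rw [hall, hzero] at hsplit
  have hmul := mul_le_mul_of_nonneg_left hcard (Nat.cast_nonneg (α := ℤ) (Fintype.card F))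
  linear_combination hmul + hsplit

lemma signSum_pow_sq_le [CharP F 2] {d : ℕ} (hd : 0 < d) {ν : F} (hν : ν ≠ 0) :
    signSum (fun s => Tr (ν * s ^ d)) ^ 2 ≤ d * (d - 1) * Fintype.card F := by
  classical
  set G : F → ℤ := fun A => signSum fun s => Tr (A * s ^ d)
  have hG : ∀ r ≠ 0, G (ν * r ^ d) = G ν := fun r hr => by
    simp only [G, mul_assoc, ← mul_pow]
    exact Equiv.sum_comp (Equiv.mulLeft₀ r hr) fun s => signChar (Tr (ν * s ^ d))
  have hfib : ∀ A ∈ univ.erase (0 : F), #{r ∈ univ.erase (0 : F) | ν * r ^ d = A} ≤ d := by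
    intro A _
    refine (card_le_card fun r hr => ?_).trans (card_filter_pow_eq_le hd (ν⁻¹ * A))
    simp only [mem_filter, mem_univ, true_and] at hr ⊢
    rw [← hr.2, inv_mul_cancel_left₀ hν]
  have hq : 0 < (Fintype.card F : ℤ) - 1 := by
    have h := Fintype.one_lt_card (α := F)
    lia
  refine le_of_mul_le_mul_left ?_ hq
  calc ((Fintype.card F : ℤ) - 1) * G ν ^ 2
      = ∑ r ∈ univ.erase (0 : F), G (ν * r ^ d) ^ 2 := by
        rw [sum_congr rfl fun r hr => by rw [hG r (ne_of_mem_erase hr)], sum_const,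
          card_erase_of_mem (mem_univ _), card_univ, nsmul_eq_mul,
          Nat.cast_sub Fintype.card_pos, Nat.cast_one]
    _ = ∑ A ∈ univ.erase (0 : F), ∑ r ∈ univ.erase (0 : F) with ν * r ^ d = A, G A ^ 2 := by
        refine (sum_fiberwise_of_maps_to' (fun r hr => ?_) fun A => G A ^ 2).symm
        simp [hν, ne_of_mem_erase hr]
    _ ≤ ∑ A ∈ univ.erase (0 : F), d * G A ^ 2 := by
        refine sum_le_sum fun A hA => ?_
        rw [sum_const, nsmul_eq_mul]
        gcongr
        exact hfib A hA
    _ ≤ d * ((d - 1) * Fintype.card F * (Fintype.card F - 1)) := by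
        rw [← mul_sum]
        exact mul_le_mul_of_nonneg_left (sum_erase_signSum_pow_sq_le hd) (Nat.cast_nonneg d)
    _ = ((Fintype.card F : ℤ) - 1) * (d * (d - 1) * Fintype.card F) := by ring

end PowerSum

section ExpSum

variable {F : Type*} [Field F] [Algebra (ZMod 2) F]

/-- The exponential sum `∑ s, (-1)^Tr(A s⁷ + B s⁻³)`, where the inverse of `0` is `0`. -/
def expSum [Fintype F] (A B : F) : ℤ :=
  signSum fun s => Tr (A * s ^ 7 + B * (s ^ 3)⁻¹)

lemma expSum_mul_pow [Fintype F] (A : F) {r : F} (hr : r ≠ 0) :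
    expSum (A * r ^ 7) (r ^ 3)⁻¹ = expSum A 1 := by
  simp only [expSum, mul_assoc, ← mul_pow, ← mul_inv, one_mul]
  exact Equiv.sum_comp (Equiv.mulLeft₀ r hr) fun s => signChar (Tr (A * s ^ 7 + (s ^ 3)⁻¹))

lemma expSum_zero_zero [Fintype F] : expSum 0 (0 : F) = Fintype.card F := by
  simp [expSum, signSum]

variable [CharP F 2]

lemma pow_three_injective [Finite F] (h1 : Tr (1 : F) = 1) :
    Function.Injective fun s : F => s ^ 3 := by
  intro s r hsr
  simp only at hsr
  by_cases hr : r = 0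
  · subst hr
    simpa using hsr
  have hfac : ((s / r) ^ 2 + s / r + 1) * (s / r - 1) = 0 := by
    field_simp
    linear_combination hsr
  rcases mul_eq_zero.mp hfac with h | h
  · have h10 : Tr (1 : F) = 0 := exists_sq_add_self_eq_iff.mp ⟨_, CharTwo.add_eq_zero.mp h⟩
    simp [h1] at h10
  · exact (div_eq_one_iff_eq hr).mp (sub_eq_zero.mp h)

variable [Fintype F]

/-- The permutation `s ↦ s⁻³` of a finite field of characteristic two and odd degree. -/
def cubeInvPerm (h1 : Tr (1 : F) = 1) : Equiv.Perm F :=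
  Equiv.ofBijective (fun s => (s ^ 3)⁻¹)
    (Finite.injective_iff_bijective.mp (inv_injective.comp (pow_three_injective h1)))

lemma cubeInvPerm_apply (h1 : Tr (1 : F) = 1) (s : F) : cubeInvPerm h1 s = (s ^ 3)⁻¹ := rfl

lemma sixteen_mul_card_exceptionalSet_eq_expSum (h1 : Tr (1 : F) = 1) {μ ν : F}
    (hμν : μ * ν ^ 3 = 1) : 16 * (#(exceptionalSet μ) : ℤ) =
      Fintype.card F - 16 + expSum ν 0 + 7 * expSum ν 1 := by
  let β := cubeInvPerm h1
  have hβ0 : β.symm 0 = 0 := by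
    rw [Equiv.symm_apply_eq]
    simp [β, cubeInvPerm_apply]
  have hδ : ∀ b ≠ 0, μ * b ^ 7 * (ν * β.symm b ^ 7) ^ 3 = 1 := by
    intro b hb
    obtain ⟨s, rfl⟩ := β.surjective b
    have hs : s ≠ 0 := by
      rintro rfl
      simp [β, cubeInvPerm_apply] at hb
    rw [Equiv.symm_apply_apply]
    simp only [β, cubeInvPerm_apply]
    field_simp
    exact hμν
  have hT (C : F) : expSum ν C = ∑ b, signChar (Tr (ν * β.symm b ^ 7 + C * b)) := by
    rw [← Equiv.sum_comp β fun b => signChar (Tr (ν * β.symm b ^ 7 + C * b))]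
    simp only [Equiv.symm_apply_apply]
    rfl
  rw [sixteen_mul_card_exceptionalSet h1 (by simp [hβ0]) hδ, hT, hT]
  simp

lemma sum_expSum_of_ne_zero (h1 : Tr (1 : F) = 1) (w : ℤ → ℤ) {B : F} (hB : B ≠ 0) :
    ∑ A, w (expSum A B) = ∑ A : F, w (expSum A 1) := by
  obtain ⟨r, rfl⟩ := (cubeInvPerm h1).surjective B
  have hr : r ≠ 0 := by
    rintro rfl
    simp [cubeInvPerm_apply] at hB
  rw [← Equiv.sum_comp (Equiv.mulRight₀ (r ^ 7) (pow_ne_zero 7 hr))]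
  exact sum_congr rfl fun A _ => congrArg w (expSum_mul_pow A hr)

lemma expSum_zero_one (h1 : Tr (1 : F) = 1) : expSum 0 (1 : F) = 0 := by
  rw [← sum_signChar_absTrace (F := F), ← Equiv.sum_comp (cubeInvPerm h1)]
  simp [expSum, signSum, cubeInvPerm_apply]

end ExpSum

section Moments

variable {F : Type*} [Field F]

/-- The polynomial obtained by eliminating `x` from `x⁷ + y⁷ + 1 = 0` and `x⁻³ + y⁻³ + 1 = 0`. -/
def eliminant (F : Type*) [Field F] : Polynomial F :=
  Polynomial.X ^ 21 + (1 + Polynomial.X ^ 3) ^ 7 * (1 + Polynomial.X ^ 7) ^ 3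

lemma natDegree_eliminant_le : (eliminant F).natDegree ≤ 42 := by
  unfold eliminant
  compute_degree

lemma eliminant_ne_zero : eliminant F ≠ 0 := fun h => by
  simpa [eliminant] using congrArg (Polynomial.eval 0) h

lemma card_insert_insert_roots_eliminant_le [DecidableEq F] :
    #(insert 0 (insert 1 (eliminant F).roots.toFinset)) ≤ 44 := by
  have hroots : #(eliminant F).roots.toFinset ≤ 42 := (Multiset.toFinset_card_le _).trans
    ((Polynomial.card_roots' _).trans natDegree_eliminant_le)
  refine (card_insert_le _ _).trans (Nat.succ_le_succ ((card_insert_le _ _).trans ?_))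
  exact Nat.succ_le_succ hroots

variable [CharP F 2]

lemma eval_eliminant {x y : F} (hx : x ≠ 0) (hy : y ≠ 0) (h7 : x ^ 7 + y ^ 7 + 1 = 0)
    (h3 : (x ^ 3)⁻¹ + (y ^ 3)⁻¹ + 1 = 0) : (eliminant F).eval y = 0 := by
  have hx7 : x ^ 7 = 1 + y ^ 7 := by
    rw [← CharTwo.add_eq_zero, ← h7]
    ring
  have hx3 : x ^ 3 * (1 + y ^ 3) = y ^ 3 := by
    field_simp at h3
    rw [← CharTwo.add_eq_zero, ← mul_zero (x ^ 3 * y ^ 3), ← h3]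
    ring
  simp only [eliminant, Polynomial.eval_add, Polynomial.eval_mul, Polynomial.eval_pow,
    Polynomial.eval_X, Polynomial.eval_one]
  rw [CharTwo.add_eq_zero, ← hx7]
  linear_combination -congrArg (· ^ 7) hx3

variable [Algebra (ZMod 2) F]

lemma mem_roots_eliminant [Finite F] [DecidableEq F] (h1 : Tr (1 : F) = 1) {x y : F}
    (h7 : x ^ 7 + y ^ 7 + 1 = 0) (h3 : (x ^ 3)⁻¹ + (y ^ 3)⁻¹ + 1 = 0) :
    y ∈ insert 0 (insert 1 (eliminant F).roots.toFinset) := by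
  rw [mem_insert, mem_insert, Multiset.mem_toFinset, Polynomial.mem_roots eliminant_ne_zero]
  refine or_iff_not_imp_left.mpr fun hy => ?_
  by_cases hx : x = 0
  · have hy3 : y ^ 3 = 1 ^ 3 := by
      rw [hx, zero_pow three_ne_zero, inv_zero, zero_add, CharTwo.add_eq_zero, inv_eq_one] at h3
      rw [h3, one_pow]
    exact Or.inl (pow_three_injective h1 hy3)
  · exact Or.inr (eval_eliminant hx hy h7 h3)

variable [Fintype F]

/- Since cubing is injective, `(r, u)` determines the first coordinate; for `u ≠ 0` the ratio
`r / u` is `0`, `1` or a root of the eliminant. -/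
lemma card_pow_seven_cube_inv_le [DecidableEq F] (h1 : Tr (1 : F) = 1) :
    #{p : F × F × F | p.1 ^ 7 + (p.2.1 ^ 7 + p.2.2 ^ 7) = 0 ∧
      (p.1 ^ 3)⁻¹ + ((p.2.1 ^ 3)⁻¹ + (p.2.2 ^ 3)⁻¹) = 0} ≤ 45 * Fintype.card F := by
  let E : Finset F := insert 0 (insert 1 (eliminant F).roots.toFinset)
  let R : Finset (F × F) :=
    univ.image (fun r => (r, 0)) ∪ (E ×ˢ univ).image fun p => (p.1 * p.2, p.2)
  have hR : #R ≤ 45 * Fintype.card F := by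
    have hsum := (card_union_le _ _).trans (add_le_add (card_image_le (s := univ)
      (f := fun r : F => (r, (0 : F)))) (card_image_le (s := E ×ˢ univ)
      (f := fun p : F × F => (p.1 * p.2, p.2))))
    rw [card_product, card_univ] at hsum
    have hE : #E * Fintype.card F ≤ 44 * Fintype.card F :=
      Nat.mul_le_mul_right _ card_insert_insert_roots_eliminant_le
    lia
  refine (card_le_card_of_injOn Prod.snd ?_ ?_).trans hR
  · rintro ⟨s, r, u⟩ hp
    simp only [coe_filter, mem_univ, true_and, Set.mem_ofPred_eq] at hp
    by_cases hu : u = 0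
    · simp [R, hu]
    · refine mem_union_right _ (mem_image.mpr ⟨(r / u, u), ?_, by simp [hu]⟩)
      simp only [mem_product, mem_univ, and_true]
      refine mem_roots_eliminant h1 (x := s / u) ?_ ?_
      · field_simp
        linear_combination hp.1
      · simp only [div_pow, inv_div]
        linear_combination u ^ 3 * hp.2 - mul_inv_cancel₀ (pow_ne_zero 3 hu)
  · rintro ⟨s, r, u⟩ hp ⟨t, r', u'⟩ hp' heq
    simp only [coe_filter, mem_univ, true_and, Set.mem_ofPred_eq, Prod.mk.injEq] at hp hp' heq ⊢
    obtain ⟨rfl, rfl⟩ := heq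
    exact ⟨pow_three_injective h1 (inv_injective (add_right_cancel (hp.2.trans hp'.2.symm))), rfl,
      rfl⟩

lemma sum_sum_expSum_sq (h1 : Tr (1 : F) = 1) :
    ∑ A : F, ∑ B, expSum A B ^ 2 = (Fintype.card F : ℤ) ^ 3 := by
  classical
  have hsol : #{p : F × F | p.1 ^ 7 + p.2 ^ 7 = 0 ∧ (p.1 ^ 3)⁻¹ + (p.2 ^ 3)⁻¹ = 0} =
      Fintype.card F := by
    rw [← card_univ, ← card_image_of_injective univ (f := fun s : F => (s, s))
      fun s r h => congrArg Prod.fst h]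
    congr 1
    ext ⟨s, r⟩
    simp only [CharTwo.add_eq_zero, mem_filter, mem_univ, true_and, mem_image, Prod.mk.injEq,
      exists_eq_left]
    refine ⟨fun h => pow_three_injective h1 (inv_injective h.2), ?_⟩
    rintro rfl
    simp
  have hsum := sum_sum_signSum_absTrace (fun p : F × F => p.1 ^ 7 + p.2 ^ 7)
    fun p => (p.1 ^ 3)⁻¹ + (p.2 ^ 3)⁻¹
  rw [hsol] at hsum
  rw [pow_succ, ← hsum]
  simp only [sq, expSum, signSum_mul_signSum, ← map_add]
  refine sum_congr rfl fun A _ => sum_congr rfl fun B _ => congrArg signSum (funext fun p => ?_)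
  ring_nf

lemma sum_sum_expSum_pow_three_le (h1 : Tr (1 : F) = 1) :
    ∑ A : F, ∑ B, expSum A B ^ 3 ≤ 45 * (Fintype.card F : ℤ) ^ 3 := by
  classical
  have hsum := sum_sum_signSum_absTrace
    (fun p : F × F × F => p.1 ^ 7 + (p.2.1 ^ 7 + p.2.2 ^ 7))
    fun p => (p.1 ^ 3)⁻¹ + ((p.2.1 ^ 3)⁻¹ + (p.2.2 ^ 3)⁻¹)
  have hcard : ∑ A : F, ∑ B, expSum A B ^ 3 = (Fintype.card F : ℤ) ^ 2 *
      #{p : F × F × F | p.1 ^ 7 + (p.2.1 ^ 7 + p.2.2 ^ 7) = 0 ∧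
        (p.1 ^ 3)⁻¹ + ((p.2.1 ^ 3)⁻¹ + (p.2.2 ^ 3)⁻¹) = 0} := by
    rw [← hsum]
    have hpow (t : ℤ) : t ^ 3 = t * (t * t) := by ring
    simp only [hpow, expSum, signSum_mul_signSum, ← map_add]
    refine sum_congr rfl fun A _ => sum_congr rfl fun B _ => congrArg signSum (funext fun p => ?_)
    ring_nf
  have hle : (#{p : F × F × F | p.1 ^ 7 + (p.2.1 ^ 7 + p.2.2 ^ 7) = 0 ∧
      (p.1 ^ 3)⁻¹ + ((p.2.1 ^ 3)⁻¹ + (p.2.2 ^ 3)⁻¹) = 0} : ℤ) ≤ 45 * Fintype.card F :=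
    mod_cast card_pow_seven_cube_inv_le h1
  rw [hcard]
  nlinarith [sq_nonneg (Fintype.card F : ℤ)]

/- All the sums `expSum A B` with `B ≠ 0` are rescalings of sums `expSum A 1`, so the total weight
of `t ↦ t²(t + L)` over all `A` and `B` bounds `q - 1` times a single value. -/
lemma expSum_weighted_le (h1 : Tr (1 : F) = 1) {L : ℤ} (hL : ∀ A : F, 0 ≤ expSum A 1 + L)
    (h0 : 0 ≤ ∑ A : F, expSum A 0 ^ 2 * (expSum A 0 + L)) (ν : F) :
    (Fintype.card F - 1) * (expSum ν 1 ^ 2 * (expSum ν 1 + L)) ≤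
      (Fintype.card F : ℤ) ^ 3 * (45 + L) := by
  classical
  let w : ℤ → ℤ := fun t => t ^ 2 * (t + L)
  have htotal : ∑ B : F, ∑ A, w (expSum A B) ≤ (Fintype.card F : ℤ) ^ 3 * (45 + L) := by
    have hw : ∑ B : F, ∑ A, w (expSum A B) =
        ∑ A : F, ∑ B, expSum A B ^ 3 + L * ∑ A : F, ∑ B, expSum A B ^ 2 := by
      rw [sum_comm]
      simp only [mul_sum, ← sum_add_distrib, w]
      exact sum_congr rfl fun A _ => sum_congr rfl fun B _ => by ring
    rw [hw, sum_sum_expSum_sq h1]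
    linear_combination sum_sum_expSum_pow_three_le h1
  have hterm : w (expSum ν 1) ≤ ∑ A : F, w (expSum A 1) :=
    single_le_sum (f := fun A => w (expSum A 1))
      (fun A _ => mul_nonneg (sq_nonneg _) (hL A)) (mem_univ ν)
  have hsplit : ∑ B : F, ∑ A, w (expSum A B) =
      (Fintype.card F - 1) * ∑ A : F, w (expSum A 1) + ∑ A : F, w (expSum A 0) := by
    rw [← sum_erase_add _ _ (mem_univ (0 : F)),
      sum_congr rfl fun B hB => sum_expSum_of_ne_zero h1 w (ne_of_mem_erase hB), sum_const,
      card_erase_of_mem (mem_univ _), card_univ, nsmul_eq_mul, Nat.cast_sub Fintype.card_pos,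
      Nat.cast_one]
  have hq : 0 ≤ (Fintype.card F : ℤ) - 1 := by
    have h := Fintype.one_lt_card (α := F)
    lia
  have hmul := mul_le_mul_of_nonneg_left hterm hq
  linarith

end Moments

section CardExceptional

variable {F : Type*} [Field F] [Fintype F] [Algebra (ZMod 2) F]

lemma expSum_zero_right_of_coprime (h7 : (Fintype.card F - 1).Coprime 7) {ν : F} (hν : ν ≠ 0) :
    expSum ν 0 = 0 := by
  have hinj : Function.Injective fun s : F => s ^ 7 := by
    intro s r hsr
    simp only at hsr
    by_cases hr : r = 0
    · subst hr
      simpa using hsr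
    have hs : s ≠ 0 := by
      rintro rfl
      exact hr (by simpa using hsr.symm)
    have hpow : (s / r) ^ 7 = 1 := by rw [div_pow, hsr, div_self (pow_ne_zero 7 hr)]
    have hgcd := pow_gcd_eq_one.mpr
      ⟨FiniteField.pow_card_sub_one_eq_one _ (div_ne_zero hs hr), hpow⟩
    rw [h7, pow_one] at hgcd
    exact (div_eq_one_iff_eq hr).mp hgcd
  have hbij : Function.Bijective fun s : F => ν * s ^ 7 :=
    Finite.injective_iff_bijective.mp ((mul_right_injective₀ hν).comp hinj)
  rw [← sum_signChar_absTrace (F := F), ← hbij.sum_comp fun b => signChar (Tr b)]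
  simp [expSum, signSum]

lemma expSum_zero_right_eq (ν : F) : expSum ν 0 = signSum fun s => Tr (ν * s ^ 7) := by
  simp [expSum]

variable [CharP F 2]

lemma expSum_zero_right_sq_le {ν : F} (hν : ν ≠ 0) : expSum ν 0 ^ 2 ≤ 42 * Fintype.card F := by
  rw [expSum_zero_right_eq]
  exact (signSum_pow_sq_le (by norm_num) hν).trans_eq (by norm_num)

lemma sum_erase_expSum_zero_right_sq_le [DecidableEq F] :
    ∑ A ∈ univ.erase (0 : F), expSum A 0 ^ 2 ≤ 6 * Fintype.card F * (Fintype.card F - 1) := by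
  simp only [expSum_zero_right_eq]
  exact (sum_erase_signSum_pow_sq_le (by norm_num)).trans_eq (by norm_num)

lemma sixteen_le_card_add_expSum (h1 : Tr (1 : F) = 1) {A : F} (hA : A ≠ 0) :
    16 ≤ Fintype.card F + expSum A 0 + 7 * expSum A 1 := by
  have hX := sixteen_mul_card_exceptionalSet_eq_expSum h1
    (inv_mul_cancel₀ (pow_ne_zero 3 hA))
  lia

/- The weight `t²(t + L)` is used with the smallest `L` that `0 ≤ #(exceptionalSet _)` guarantees
to be at least `-T(A, 1)`: here `L = 16`, because seventh powers permute `F`, and `L = 3 * j`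
below. -/
lemma card_exceptionalSet_le_of_card_eq (h1 : Tr (1 : F) = 1) (hq : Fintype.card F = 128)
    {μ ν : F} (hμν : μ * ν ^ 3 = 1) : #(exceptionalSet μ) ≤ 46 := by
  classical
  have hν : ν ≠ 0 := by rintro rfl; simp at hμν
  have hzero (A : F) (hA : A ≠ 0) : expSum A 0 = 0 :=
    expSum_zero_right_of_coprime (by rw [hq]; norm_num) hA
  have hX := sixteen_mul_card_exceptionalSet_eq_expSum h1 hμν
  have hL (A : F) : 0 ≤ expSum A 1 + 16 := by
    by_cases hA : A = 0
    · simp [hA, expSum_zero_one h1]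
    · have h := sixteen_le_card_add_expSum h1 hA
      rw [hzero A hA, hq] at h
      lia
  have h0 : 0 ≤ ∑ A : F, expSum A 0 ^ 2 * (expSum A 0 + 16) := by
    refine sum_nonneg fun A _ => ?_
    by_cases hA : A = 0
    · rw [hA, expSum_zero_zero]
      positivity
    · simp [hzero A hA]
  have hle := expSum_weighted_le h1 hL h0 ν
  rw [hzero ν hν] at hX
  rw [hq] at hX hle
  by_contra! hcard
  have hT : 96 ≤ expSum ν 1 := by lia
  have hw : 96 ^ 2 * 112 ≤ expSum ν 1 ^ 2 * (expSum ν 1 + 16) := by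
    gcongr
    lia
  norm_num at hle hw
  lia

lemma abs_expSum_zero_right_le {j : ℕ} (hj : 32 ≤ j) (hq : Fintype.card F = 16 * j) {A : F}
    (hA : A ≠ 0) : |expSum A 0| ≤ 5 * j := by
  refine abs_le_of_sq_le_sq ((expSum_zero_right_sq_le hA).trans ?_) (by positivity)
  rw [hq]
  push_cast
  nlinarith

lemma sum_weighted_expSum_zero_right_nonneg {j : ℕ} (hj : 32 ≤ j)
    (hq : Fintype.card F = 16 * j) : 0 ≤ ∑ A : F, expSum A 0 ^ 2 * (expSum A 0 + 3 * j) := by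
  classical
  have hterm : ∀ A ∈ univ.erase (0 : F),
      -(2 * j) * expSum A 0 ^ 2 ≤ expSum A 0 ^ 2 * (expSum A 0 + 3 * j) := fun A hA => by
    have hneg := neg_le_of_abs_le (abs_expSum_zero_right_le hj hq (ne_of_mem_erase hA))
    nlinarith [sq_nonneg (expSum A 0)]
  have hsum := sum_le_sum hterm
  have hsq := sum_erase_expSum_zero_right_sq_le (F := F)
  rw [← mul_sum] at hsum
  rw [← sum_erase_add _ _ (mem_univ (0 : F)), expSum_zero_zero]
  rw [hq] at hsq ⊢
  push_cast at hsq ⊢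
  nlinarith

lemma card_exceptionalSet_le_of_card_eq_mul (h1 : Tr (1 : F) = 1) {j : ℕ} (hj : 32 ≤ j)
    (hq : Fintype.card F = 16 * j) {μ ν : F} (hμν : μ * ν ^ 3 = 1) :
    32 * (#(exceptionalSet μ) : ℤ) ≤ 13 * (16 * j) - 192 := by
  have hν : ν ≠ 0 := by rintro rfl; simp at hμν
  have hX := sixteen_mul_card_exceptionalSet_eq_expSum h1 hμν
  have habs (A : F) (hA : A ≠ 0) : expSum A 0 ≤ 5 * j :=
    (le_abs_self _).trans (abs_expSum_zero_right_le hj hq hA)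
  have hL (A : F) : 0 ≤ expSum A 1 + 3 * j := by
    by_cases hA : A = 0
    · rw [hA, expSum_zero_one h1]
      positivity
    · have h := sixteen_le_card_add_expSum h1 hA
      have hA0 := habs A hA
      rw [hq] at h
      lia
  have hle := expSum_weighted_le h1 hL (sum_weighted_expSum_zero_right_nonneg hj hq) ν
  have hT0 := habs ν hν
  rw [hq] at hX hle
  push_cast at hX hle
  by_contra! hcard
  have hT : 11 * (j : ℤ) ≤ expSum ν 1 := by lia
  have hw : (11 * (j : ℤ)) ^ 2 * (14 * j) ≤ expSum ν 1 ^ 2 * (expSum ν 1 + 3 * j) := by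
    gcongr
    lia
  have hmul := mul_le_mul_of_nonneg_left hw (show 0 ≤ 16 * (j : ℤ) - 1 by lia)
  have hj3 : 0 < (j : ℤ) ^ 3 := by positivity
  nlinarith

end CardExceptional

section QuarticForm

variable {F : Type*} [Field F] [Algebra (ZMod 2) F] [CharP F 2]

/-- For `a ≠ 0`, the form `(c, x) ↦ Tr (mooreDet ![a, b, c, x])`, defined through its reduction to a
cubic form in `℘(b/a)`, `℘(c/a)` and `℘(x/a)`, where `℘` is the Artin–Schreier map. -/
def quarticForm (a b : F) : F →+ F →+ ZMod 2 :=
  let φ : F →+ F := (artinSchreier F).comp (AddMonoidHom.mulLeft a⁻¹)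
  ((cubicForm (a ^ 15) (φ b)).compl₂ φ).comp φ

lemma quarticForm_apply (a b c x : F) : quarticForm a b c x = cubicForm (a ^ 15)
    (artinSchreier F (a⁻¹ * b)) (artinSchreier F (a⁻¹ * c)) (artinSchreier F (a⁻¹ * x)) := rfl

lemma quarticForm_eq_absTrace_mooreDet {a : F} (ha : a ≠ 0) (b c x : F) :
    quarticForm a b c x = Tr (mooreDet ![a, b, c, x]) := by
  have hcons : ![a, b, c, x] = Fin.cons a fun i => a * ![a⁻¹ * b, a⁻¹ * c, a⁻¹ * x] i := by
    ext i
    fin_cases i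
    exacts [rfl, (mul_inv_cancel_left₀ ha b).symm, (mul_inv_cancel_left₀ ha c).symm,
      (mul_inv_cancel_left₀ ha x).symm]
  rw [hcons, mooreDet_cons_mul, quarticForm_apply, cubicForm_apply]
  congr 3

variable [Finite F]

lemma card_ker_quarticForm {a : F} (ha : a ≠ 0) (b : F) : Nat.card (quarticForm a b).ker =
    2 * Nat.card (restrictedRadical (cubicForm (a ^ 15) (artinSchreier F (a⁻¹ * b)))
      (absTrace F).ker) := by
  set R := restrictedRadical (cubicForm (a ^ 15) (artinSchreier F (a⁻¹ * b))) (absTrace F).ker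
  have hpre : (a * ·) ⁻¹' ((quarticForm a b).ker : Set F) = artinSchreier F ⁻¹' (R : Set F) := by
    ext c
    have hc : artinSchreier F c ∈ (absTrace F).ker := range_artinSchreier.le ⟨c, rfl⟩
    have hform (x : F) : quarticForm a b (a * c) x = cubicForm (a ^ 15)
        (artinSchreier F (a⁻¹ * b)) (artinSchreier F c) (artinSchreier F (a⁻¹ * x)) := by
      rw [quarticForm_apply, inv_mul_cancel_left₀ ha]
    simp only [Set.mem_preimage, SetLike.mem_coe, AddMonoidHom.mem_ker, AddMonoidHom.ext_iff,
      AddMonoidHom.zero_apply, hform]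
    refine ⟨fun h => ⟨hc, fun w hw => ?_⟩, fun h x => h.2 _ (range_artinSchreier.le ⟨_, rfl⟩)⟩
    obtain ⟨x, rfl⟩ := range_artinSchreier.ge hw
    simpa only [inv_mul_cancel_left₀ ha] using h (a * x)
  calc Nat.card (quarticForm a b).ker
      = Nat.card ((a * ·) ⁻¹' ((quarticForm a b).ker : Set F)) :=
        (Nat.card_preimage_of_injective (mul_right_injective₀ ha) (by
          rw [(mul_left_surjective₀ ha).range_eq]; exact Set.subset_univ _)).symm
    _ = 2 * Nat.card R := by
        rw [hpre]
        exact card_preimage_artinSchreier fun w hw => hw.1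

lemma card_ker_cubicForm_eq_two_or_eight (h1 : Tr (1 : F) = 1) {μ b : F} (hμ : μ ≠ 0)
    (hb : b ≠ 0) : Nat.card (cubicForm μ b).ker = 2 ∨ Nat.card (cubicForm μ b).ker = 8 := by
  obtain ⟨δ, hδ⟩ := Finite.surjective_of_injective (pow_three_injective h1) (μ * b ^ 7)⁻¹
  have hδ1 : μ * b ^ 7 * δ ^ 3 = 1 := by
    simp only [hδ]
    exact mul_inv_cancel₀ (mul_ne_zero hμ (pow_ne_zero 7 hb))
  by_cases htr : Tr δ = 0
  · exact Or.inr (card_ker_cubicForm_of_absTrace_eq_zero h1 hδ1 htr)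
  · exact Or.inl (card_ker_cubicForm_of_absTrace_eq_one h1 hδ1 (Fin.eq_one_of_ne_zero _ htr))

lemma card_ker_quarticForm_le (h1 : Tr (1 : F) = 1) {a b : F} (ha : a ≠ 0) (hb : b ≠ 0)
    (hba : b ≠ a) : Nat.card (quarticForm a b).ker ≤ 32 := by
  have hcard := card_ker_cubicForm_eq_two_or_eight h1 (pow_ne_zero 15 ha)
    (artinSchreier_inv_mul_ne_zero ha hb hba)
  have hR := card_restrictedRadical_ker_le
    (B := cubicForm (a ^ 15) (artinSchreier F (a⁻¹ * b))) (t := absTrace F)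
  rw [card_ker_quarticForm ha]
  lia

end QuarticForm

section QuarticFormCount

variable {F : Type*} [Field F] [Fintype F] [Algebra (ZMod 2) F] [CharP F 2]

lemma card_ker_quarticForm_le_of_notMem (h1 : Tr (1 : F) = 1) {a b : F} (ha : a ≠ 0)
    (hb : b ≠ 0) (hba : b ≠ a) (hX : artinSchreier F (a⁻¹ * b) ∉ exceptionalSet (a ^ 15)) :
    Nat.card (quarticForm a b).ker ≤ 8 := by
  have hw := artinSchreier_inv_mul_ne_zero ha hb hba
  rw [card_ker_quarticForm ha]
  rcases card_ker_cubicForm_eq_two_or_eight h1 (pow_ne_zero 15 ha) hw with hcard | hcard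
  · have hR := card_restrictedRadical_ker_le
      (B := cubicForm (a ^ 15) (artinSchreier F (a⁻¹ * b))) (t := absTrace F)
    lia
  · have hR := two_mul_card_restrictedRadical_ker_le (t := absTrace F)
      (cubicForm_comm (a ^ 15) (artinSchreier F (a⁻¹ * b)))
      fun hle => hX (mem_exceptionalSet.mpr ⟨hw, hcard, hle⟩)
    lia

lemma card_artinSchreier_inv_mul_mem_exceptionalSet [DecidableEq F] {a : F}
    (ha : a ≠ 0) (μ : F) :
    #{b | artinSchreier F (a⁻¹ * b) ∈ exceptionalSet μ} = 2 * #(exceptionalSet μ) := by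
  have htr : ∀ w ∈ (exceptionalSet μ : Set F), Tr w = 0 := fun w hw =>
    (mem_exceptionalSet.mp hw).2.2 (self_mem_ker_cubicForm μ w)
  calc #{b | artinSchreier F (a⁻¹ * b) ∈ exceptionalSet μ}
      = #{c | artinSchreier F c ∈ exceptionalSet μ} :=
        card_equiv (Equiv.mulLeft₀ a⁻¹ (inv_ne_zero ha)) fun b => by simp
    _ = Nat.card (artinSchreier F ⁻¹' (exceptionalSet μ : Set F)) := by
        rw [Nat.card_coe_set_eq, ← Set.ncard_coe_finset, coe_filter_univ]
        rfl
    _ = 2 * #(exceptionalSet μ) := by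
        rw [card_preimage_artinSchreier htr, Nat.card_coe_set_eq, Set.ncard_coe_finset]

end QuarticFormCount

section Chain

variable {F : Type*} [Field F] [Fintype F] [Algebra (ZMod 2) F] [CharP F 2] {u : F → ZMod 2}

lemma signSum_fwdDiff_fwdDiff_le {a : F} (ha : a ≠ 0) {b : F} {k : ℕ}
    (hu : ∀ c x y, Δ_[x] (Δ_[c] (Δ_[b] (Δ_[a] u))) y = Tr (mooreDet ![a, b, c, x]))
    (hk : Nat.card (quarticForm a b).ker ≤ k) :
    (signSum (Δ_[b] (Δ_[a] u)) : ℝ) ≤ √(k * Fintype.card F) := by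
  have hsq := signSum_sq_le_card_mul_card_ker (quarticForm a b) fun c x y =>
    (hu c x y).trans (quarticForm_eq_absTrace_mooreDet ha b c x).symm
  refine Real.le_sqrt_of_sq_le ?_
  rw [mul_comm]
  exact_mod_cast hsq.trans (mul_le_mul_of_nonneg_left (Nat.cast_le.mpr hk) (Nat.cast_nonneg _))

open Classical in
lemma signSum_fwdDiff_fwdDiff_le_add_ite (h1 : Tr (1 : F) = 1) {a : F} (ha : a ≠ 0) (b : F)
    (hu : ∀ c x y, Δ_[x] (Δ_[c] (Δ_[b] (Δ_[a] u))) y = Tr (mooreDet ![a, b, c, x])) :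
    (signSum (Δ_[b] (Δ_[a] u)) : ℝ) ≤ √(8 * Fintype.card F)
      + (if b = 0 then Fintype.card F - √(8 * Fintype.card F) else 0)
      + (if b = a then Fintype.card F - √(8 * Fintype.card F) else 0)
      + if artinSchreier F (a⁻¹ * b) ∈ exceptionalSet (a ^ 15) then √(8 * Fintype.card F)
        else 0 := by
  have hs := Real.sqrt_nonneg (8 * Fintype.card F)
  have htriv : (signSum (Δ_[b] (Δ_[a] u)) : ℝ) ≤ Fintype.card F := mod_cast signSum_le_card _
  by_cases hb : b = 0
  · subst hb
    simp only [if_true, ha.symm, if_false]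
    split_ifs <;> linarith
  by_cases hba : b = a
  · simp only [hba, if_true, ha, if_false] at htriv ⊢
    split_ifs <;> linarith
  simp only [hb, hba, if_false, add_zero]
  split_ifs with hX
  · have h32 : √((32 : ℕ) * Fintype.card F) = √(8 * Fintype.card F) + √(8 * Fintype.card F) := by
      rw [← two_mul, ← Real.sqrt_sq zero_le_two, ← Real.sqrt_mul (sq_nonneg 2)]
      congr 1
      push_cast
      ring
    exact h32 ▸ signSum_fwdDiff_fwdDiff_le ha hu (card_ker_quarticForm_le h1 ha hb hba)
  · simpa using
      signSum_fwdDiff_fwdDiff_le ha hu (card_ker_quarticForm_le_of_notMem h1 ha hb hba hX)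

lemma signSum_fwdDiff_sq_le (h1 : Tr (1 : F) = 1) {a : F} (ha : a ≠ 0)
    (hu : ∀ b c x y, Δ_[x] (Δ_[c] (Δ_[b] (Δ_[a] u))) y = Tr (mooreDet ![a, b, c, x])) :
    (signSum (Δ_[a] u) : ℝ) ^ 2 ≤ 2 * Fintype.card F
      + √(8 * Fintype.card F) * (Fintype.card F - 2 + 2 * #(exceptionalSet (a ^ 15))) := by
  classical
  calc (signSum (Δ_[a] u) : ℝ) ^ 2 = ∑ b, (signSum (Δ_[b] (Δ_[a] u)) : ℝ) :=
        mod_cast signSum_sq (Δ_[a] u)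
    _ ≤ _ := sum_le_sum fun b _ => signSum_fwdDiff_fwdDiff_le_add_ite h1 ha b (hu b)
    _ = _ := by
        simp only [sum_add_distrib, sum_const, card_univ, nsmul_eq_mul, sum_ite_eq', mem_univ,
          if_true]
        rw [← sum_filter, sum_const, card_artinSchreier_inv_mul_mem_exceptionalSet ha,
          nsmul_eq_mul]
        push_cast
        ring

lemma card_exceptionalSet_le (h1 : Tr (1 : F) = 1) {m : ℕ} (hm : 7 ≤ m) (hodd : Odd m)
    (hq : Fintype.card F = 2 ^ m) {μ ν : F} (hμν : μ * ν ^ 3 = 1) :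
    32 * (#(exceptionalSet μ) : ℤ) ≤ 13 * Fintype.card F - 192 := by
  obtain rfl | hm' := hm.eq_or_lt
  · have := card_exceptionalSet_le_of_card_eq h1 hq hμν
    lia
  · have hj : 2 ^ 5 ≤ 2 ^ (m - 4) := Nat.pow_le_pow_right two_pos (by grind)
    have hqj : Fintype.card F = 16 * 2 ^ (m - 4) := by
      rw [hq, show (16 : ℕ) = 2 ^ 4 from rfl, ← pow_add]
      congr 1
      lia
    simpa only [hqj, Nat.cast_mul, Nat.cast_ofNat] using
      card_exceptionalSet_le_of_card_eq_mul h1 hj hqj hμν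

lemma signSum_sq_le_of_fwdDiff_four_eq (h1 : Tr (1 : F) = 1) {m : ℕ} (hm : 7 ≤ m) (hodd : Odd m)
    (hq : Fintype.card F = 2 ^ m)
    (hu : ∀ a b c x y, Δ_[x] (Δ_[c] (Δ_[b] (Δ_[a] u))) y = Tr (mooreDet ![a, b, c, x])) :
    (signSum u : ℝ) ^ 2 ≤ (Fintype.card F - 1) * √(2 * Fintype.card F
      + √(8 * Fintype.card F) * (29 / 16 * Fintype.card F - 14)) + Fintype.card F := by
  refine signSum_sq_le_of_forall_fwdDiff fun a ha => ?_
  have hμν : a ^ 15 * ((a ^ 5)⁻¹) ^ 3 = 1 := by field_simp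
  have hX : 32 * (#(exceptionalSet (a ^ 15)) : ℝ) ≤ 13 * Fintype.card F - 192 :=
    mod_cast card_exceptionalSet_le h1 hm hodd hq hμν
  refine (signSum_fwdDiff_sq_le h1 ha (hu a)).trans ?_
  gcongr
  linarith

end Chain

section Boolean

variable {n : ℕ}

lemma der_eq_fwdDiff (f : Fq n → ZMod 2) (a : Fq n) : der f a = Δ_[a] f := by
  ext x
  rw [der, fwdDiff, CharTwo.sub_eq_add, add_comm]

lemma fwdDiff_four_eq_zero_of_degLE {g : Fq n → ZMod 2} (hg : degLE g 3) (a b c x : Fq n) :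
    Δ_[x] (Δ_[c] (Δ_[b] (Δ_[a] g))) = 0 := by
  have h := hg [x, c, b, a] rfl
  simp only [derIter, der_eq_fwdDiff] at h
  exact h

lemma exists_nl_eq_hdist (r : ℕ) (f : Fq n → ZMod 2) :
    ∃ g, degLE g r ∧ nl r f = hdist f g := by
  have hzero : ∀ l : List (Fq n), derIter (fun _ => 0) l = fun _ => 0 := fun l => by
    induction l with
    | nil => rfl
    | cons a l ih => rw [derIter, ih, der_eq_fwdDiff, fwdDiff_const]
  have hne : {d | ∃ g, degLE g r ∧ d = hdist f g}.Nonempty := ⟨_, _, fun l _ => hzero l, rfl⟩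
  exact Nat.sInf_mem hne

lemma signSum_add_eq [Fintype (Fq n)] (f g : Fq n → ZMod 2) :
    signSum (f + g) = Fintype.card (Fq n) - 2 * hdist f g := by
  classical
  have hterm (x : Fq n) : signChar ((f + g) x) = 1 - 2 * if f x ≠ g x then 1 else 0 := by
    simp only [Pi.add_apply, signChar_eq_ite, CharTwo.add_eq_zero]
    split_ifs <;> simp_all
  simp only [signSum, hterm, sum_sub_distrib, ← mul_sum, sum_boole, sum_const, card_univ,
    nsmul_eq_mul, mul_one, hdist]
  rw [← Set.ncard_coe_finset, coe_filter_univ]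

lemma fwdDiff_absTrace_comp {F : Type*} [Field F] [Algebra (ZMod 2) F] (h : F → F) (a : F) :
    Δ_[a] (fun x => Tr (h x)) = fun x => Tr (Δ_[a] h x) := by
  ext x
  simp only [fwdDiff, map_sub]

lemma sqrt_eight_mul_two_pow (n : ℕ) : √(8 * 2 ^ n) = (2 : ℝ) ^ (((n : ℝ) + 3) / 2) := by
  rw [Real.sqrt_eq_rpow, show (8 : ℝ) = 2 ^ 3 by norm_num, ← pow_add, ← Real.rpow_natCast,
    ← Real.rpow_mul zero_le_two]
  push_cast
  ring_nf

lemma two_mul_two_pow_add_sqrt_mul (n : ℕ) :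
    2 * 2 ^ n + √(8 * 2 ^ n) * (29 / 16 * 2 ^ n - 14) =
      29 / 8 * (2 : ℝ) ^ ((3 * (n : ℝ) + 1) / 2) + (2 : ℝ) ^ ((n : ℝ) + 1)
        - 7 * (2 : ℝ) ^ (((n : ℝ) + 5) / 2) := by
  have hprod : (2 : ℝ) ^ (((n : ℝ) + 3) / 2) * 2 ^ n = 2 * 2 ^ ((3 * (n : ℝ) + 1) / 2) := by
    rw [← Real.rpow_natCast, ← Real.rpow_add two_pos,
      ← Real.rpow_one_add' zero_le_two (by positivity)]
    ring_nf
  have hsucc : (2 : ℝ) ^ (((n : ℝ) + 5) / 2) = 2 * 2 ^ (((n : ℝ) + 3) / 2) := by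
    rw [← Real.rpow_one_add' zero_le_two (by positivity)]
    ring_nf
  rw [sqrt_eight_mul_two_pow, hsucc, Real.rpow_add_one two_ne_zero, Real.rpow_natCast]
  linear_combination 29 / 16 * hprod

end Boolean

lemma signSum_add_sq_le {n : ℕ} (hn : 7 ≤ n) (hodd : Odd n) [Fintype (Fq n)]
    {g : Fq n → ZMod 2} (hg : degLE g 3) :
    (signSum ((fun x : Fq n => Tr (x ^ 15)) + g) : ℝ) ^ 2 ≤ (2 ^ n - 1) * √(2 * 2 ^ n
      + √(8 * 2 ^ n) * (29 / 16 * 2 ^ n - 14)) + 2 ^ n := by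
  have hq : Fintype.card (Fq n) = 2 ^ n := by
    rw [← Nat.card_eq_fintype_card, GaloisField.card 2 n (by lia)]
  have h1 : Tr (1 : Fq n) = 1 := absTrace_one (by rwa [GaloisField.finrank 2 (by lia)])
  have hu (a b c x y : Fq n) :
      Δ_[x] (Δ_[c] (Δ_[b] (Δ_[a] ((fun z : Fq n => Tr (z ^ 15)) + g)))) y =
        Tr (mooreDet ![a, b, c, x]) := by
    simp only [fwdDiff_add, fwdDiff_four_eq_zero_of_degLE hg, add_zero, fwdDiff_absTrace_comp,
      fwdDiff_four_pow_fifteen]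
  simpa only [hq, Nat.cast_pow, Nat.cast_ofNat] using
    signSum_sq_le_of_fwdDiff_four_eq h1 hn hodd hq hu

/-- Third-order nonlinearity lower bound for `tr(x^15)`, odd `n ≥ 7`. -/
theorem third_order_nl_tr_x15_odd (n : ℕ) (hn : 7 ≤ n) (hodd : Odd n)
    (f : Fq n → ZMod 2) (hf : ∀ x, f x = tr (x ^ 15)) :
    (nl 3 f : ℝ) ≥ (2:ℝ) ^ ((n:ℝ) - 1) - (1/2) * Real.sqrt
      (((2:ℝ) ^ (n:ℝ) - 1) * Real.sqrt
        ((29/8) * (2:ℝ) ^ ((3 * (n:ℝ) + 1) / 2) + (2:ℝ) ^ ((n:ℝ) + 1)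
          - 7 * (2:ℝ) ^ (((n:ℝ) + 5) / 2)) + (2:ℝ) ^ (n:ℝ)) := by
  have : Fintype (Fq n) := Fintype.ofFinite _
  obtain rfl : f = fun x => Tr (x ^ 15) := funext hf
  obtain ⟨g, hg, hnl⟩ := exists_nl_eq_hdist 3 fun x : Fq n => Tr (x ^ 15)
  have hsum := signSum_add_eq (fun x : Fq n => Tr (x ^ 15)) g
  rw [← hnl, ← Nat.card_eq_fintype_card, GaloisField.card 2 n (by lia)] at hsum
  have hle := Real.le_sqrt_of_sq_le (signSum_add_sq_le hn hodd hg)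
  rw [hsum] at hle
  rw [← two_mul_two_pow_add_sqrt_mul, Real.rpow_sub_one two_ne_zero, Real.rpow_natCast]
  push_cast at hle
  linarith
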